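/- Let 𝓗 be a Hopf algebra with antipode S and a character δ with S̃_δ² = id, and let 𝒫 be a left 𝓗-module algebra. Then the double crossed product algebra H = 𝒫 ⋊ 𝓗 ⋉ 𝒫^op, with multiplication (P₁⋊h₁⋉Q₁)(P₂⋊h₂⋉Q₂) = P₁h₁⁽¹⁾(P₂) ⋊ h₁⁽²⁾h₂ ⋉ h₁⁽³⁾(Q₂)Q₁, source α(P) = P⋊1⋉1, target β(Q) = 1⋊1⋉Q, coproduct Δ(P⋊h⋉Q) = (P⋊h⁽¹⁾⋉1) ⊗_𝒫 (1⋊h⁽²⁾⋉Q), counit ε(P⋊h⋉Q) = Pε(h)Q, and T(P⋊h⋉Q) = S(h⁽³⁾)(Q) ⋊ S(h⁽²⁾) ⋉ S̃_δ(h⁽¹⁾)(P), is a para-Hopf algebroid over 𝒫. -/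

import Mathlib

open TensorProduct

noncomputable section

/-- The data of a (pre-)bialgebroid: total algebra `H`, base algebra `R`,
source map `α` (algebra map), target map `β` (anti-algebra map), a linear lift
`Δ : H → H ⊗[k] H` of the coproduct, and the counit `ε`. -/
structure PreBialgebroid (k H R : Type) [Field k] [Ring H] [Algebra k H]
    [Ring R] [Algebra k R] where
  α : R →ₐ[k] H
  β : R →ₗ[k] H
  β_one : β 1 = 1
  β_mul : ∀ a b : R, β (a * b) = β b * β a
  αβ_comm : ∀ a b : R, α a * β b = β b * α a
  Δ : H →ₗ[k] H ⊗[k] H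
  ε : H →ₗ[k] R

namespace PreBialgebroid

variable {k H R : Type} [Field k] [Ring H] [Algebra k H] [Ring R] [Algebra k R]
variable (D : PreBialgebroid k H R)

/-- The submodule of `H ⊗[k] H` by which one divides to obtain `H ⊗_R H`. -/
def rel2 : Submodule k (H ⊗[k] H) :=
  Submodule.span k {z | ∃ (r : R) (x y : H), z = (D.β r * x) ⊗ₜ[k] y - x ⊗ₜ[k] (D.α r * y)}

/-- The projection `H ⊗[k] H → H ⊗_R H`. -/
def π2 : H ⊗[k] H →ₗ[k] (H ⊗[k] H) ⧸ D.rel2 := D.rel2.mkQ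

/-- Relations for the triple tensor product `H ⊗_R H ⊗_R H` (right associated). -/
def rel3 : Submodule k (H ⊗[k] (H ⊗[k] H)) :=
  Submodule.span k {z |
    (∃ (r : R) (x y w : H), z = (D.β r * x) ⊗ₜ[k] (y ⊗ₜ[k] w) - x ⊗ₜ[k] ((D.α r * y) ⊗ₜ[k] w)) ∨
    (∃ (r : R) (x y w : H), z = x ⊗ₜ[k] ((D.β r * y) ⊗ₜ[k] w) - x ⊗ₜ[k] (y ⊗ₜ[k] (D.α r * w)))}

def π3 : H ⊗[k] (H ⊗[k] H) →ₗ[k] (H ⊗[k] (H ⊗[k] H)) ⧸ D.rel3 := D.rel3.mkQ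

/-- For a linear map `f : H → H`, the map `x ⊗ y ↦ f x * y`. -/
def mulL (f : H →ₗ[k] H) : H ⊗[k] H →ₗ[k] H :=
  TensorProduct.lift
    (LinearMap.mk₂ k (fun x y => f x * y)
      (by intro x x' y; simp [map_add, add_mul])
      (by intro c x y; simp [map_smul, smul_mul_assoc])
      (by intro x y y'; simp [mul_add])
      (by intro c x y; simp [mul_smul_comm]))

/-- For a linear map `f : H → H`, the map `x ⊗ y ↦ f y * x`. -/
def mulR (f : H →ₗ[k] H) : H ⊗[k] H →ₗ[k] H :=
  TensorProduct.lift
    (LinearMap.mk₂ k (fun x y => f y * x)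
      (by intro x x' y; simp [mul_add])
      (by intro c x y; simp [mul_smul_comm])
      (by intro x y y'; simp [map_add, add_mul])
      (by intro c x y; simp [map_smul, smul_mul_assoc]))

/-- The (lift of the) Connes–Moscovici cyclic operator in degree 2:
`x ⊗ y ↦ Δ(T x) · (y ⊗ 1)`. -/
def tau2 (T : H →ₗ[k] H) : H ⊗[k] H →ₗ[k] H ⊗[k] H :=
  TensorProduct.lift
    (LinearMap.mk₂ k (fun x y => D.Δ (T x) * (y ⊗ₜ[k] (1 : H)))
      (by intro x x' y; simp [map_add, add_mul])
      (by intro c x y; simp [map_smul, smul_mul_assoc])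
      (by intro x y y'; simp [add_tmul, mul_add])
      (by intro c x y; simp [← TensorProduct.smul_tmul', mul_smul_comm]))

/-- The bialgebroid axioms, stated for the chosen linear lift `Δ` of the coproduct
modulo the relations defining `H ⊗_R H`. -/
structure IsBialgebroid : Prop where
  Δ_one : D.π2 (D.Δ 1) = D.π2 ((1 : H) ⊗ₜ[k] (1 : H))
  coassoc : ∀ h : H,
    D.π3 ((TensorProduct.assoc k H H H) ((D.Δ.rTensor H) (D.Δ h))) =
      D.π3 ((D.Δ.lTensor H) (D.Δ h))
  Δ_cp3 : ∀ (h : H) (r : R),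
    D.π2 (D.Δ h * (D.β r ⊗ₜ[k] (1 : H) - (1 : H) ⊗ₜ[k] D.α r)) = 0
  Δ_mul : ∀ a b : H, D.π2 (D.Δ (a * b)) = D.π2 (D.Δ a * D.Δ b)
  Δ_left : ∀ (r : R) (h : H),
    D.π2 (D.Δ (D.α r * h)) = D.π2 ((D.α r ⊗ₜ[k] (1 : H)) * D.Δ h)
  Δ_right : ∀ (r : R) (h : H),
    D.π2 (D.Δ (D.β r * h)) = D.π2 (((1 : H) ⊗ₜ[k] D.β r) * D.Δ h)
  ε_one : D.ε 1 = 1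
  ε_left : ∀ (r : R) (h : H), D.ε (D.α r * h) = r * D.ε h
  ε_right : ∀ (r : R) (h : H), D.ε (D.β r * h) = D.ε h * r
  counit_l : ∀ h : H, mulL (D.α.toLinearMap ∘ₗ D.ε) (D.Δ h) = h
  counit_r : ∀ h : H, mulR (D.β ∘ₗ D.ε) (D.Δ h) = h

/-- The para-Hopf algebroid axioms for a para-antipode `T`. -/
structure IsParaHopf (T : H →ₗ[k] H) : Prop where
  bialgebroid : D.IsBialgebroid
  T_one : T 1 = 1
  T_antimul : ∀ a b : H, T (a * b) = T b * T a
  PH1 : ∀ r : R, T (D.β r) = D.α r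
  PH2 : ∀ h : H, mulL T (D.Δ h) = D.β (D.ε (T h))
  T_invol : ∀ h : H, T (T h) = h
  PH3 : ∀ h : H, D.π2 (tau2 D T (D.Δ h)) = D.π2 ((1 : H) ⊗ₜ[k] T h)

end PreBialgebroid

open Coalgebra in
/-- The convolution `δ * S` for a character `δ`. -/
def twistedAntipode {k 𝓗 : Type} [Field k] [Ring 𝓗] [HopfAlgebra k 𝓗]
    (δ : 𝓗 →ₐ[k] k) : 𝓗 →ₗ[k] 𝓗 :=
  (TensorProduct.lift
    (LinearMap.mk₂ k (fun x y => δ x • HopfAlgebra.antipode (R := k) y)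
      (by intro x x' y; simp [map_add, add_smul])
      (by intro c x y; simp [mul_smul])
      (by intro x y y'; simp [map_add, smul_add])
      (by intro c x y; simp only [map_smul]; rw [smul_comm]))) ∘ₗ comul

open Coalgebra

section DoubleCrossedProduct

variable {k 𝓗 PAlg HH : Type} [Field k] [Ring 𝓗] [HopfAlgebra k 𝓗]
  [Ring PAlg] [Algebra k PAlg] [Ring HH] [Algebra k HH]

/-- The iterated coproduct `Δ² : 𝓗 → 𝓗 ⊗ (𝓗 ⊗ 𝓗)`. -/
def comul2 : 𝓗 →ₗ[k] 𝓗 ⊗[k] (𝓗 ⊗[k] 𝓗) :=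
  (LinearMap.lTensor 𝓗 (comul (R := k))) ∘ₗ comul

/-- `a ⊗ b ⊗ c ↦ (P₁ · a(P₂)) ⊗ (b h₂) ⊗ (c(Q₂) Q₁)`, expressing the double crossed
product multiplication. -/
def dcpMul (ρ : 𝓗 →ₗ[k] PAlg →ₗ[k] PAlg) (P₁ P₂ Q₁ Q₂ : PAlg) (h₂ : 𝓗) :
    𝓗 ⊗[k] (𝓗 ⊗[k] 𝓗) →ₗ[k] PAlg ⊗[k] (𝓗 ⊗[k] PAlg) :=
  TensorProduct.map (LinearMap.mulLeft k P₁ ∘ₗ ρ.flip P₂)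
    (TensorProduct.map (LinearMap.mulRight k h₂) (LinearMap.mulRight k Q₁ ∘ₗ ρ.flip Q₂))

/-- The cyclic permutation `u ⊗ (v ⊗ w) ↦ w ⊗ (v ⊗ u)`. -/
def cyc3 (M N P : Type) [AddCommGroup M] [AddCommGroup N] [AddCommGroup P]
    [Module k M] [Module k N] [Module k P] :
    (M ⊗[k] (N ⊗[k] P)) ≃ₗ[k] (P ⊗[k] (N ⊗[k] M)) :=
  (TensorProduct.congr (LinearEquiv.refl k M) (TensorProduct.comm k N P)).trans <|
    (TensorProduct.assoc k M P N).symm.trans <|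
      (TensorProduct.congr (TensorProduct.comm k M P) (LinearEquiv.refl k N)).trans <|
        (TensorProduct.assoc k P M N).trans
          (TensorProduct.congr (LinearEquiv.refl k P) (TensorProduct.comm k M N))

/-- `a ⊗ b ⊗ c ↦ S(c)(Q) ⊗ S(b) ⊗ S̃_δ(a)(P)`, expressing the para-antipode of the
double crossed product. -/
def dcpT (ρ : 𝓗 →ₗ[k] PAlg →ₗ[k] PAlg) (δ : 𝓗 →ₐ[k] k) (P Q : PAlg) :
    𝓗 ⊗[k] (𝓗 ⊗[k] 𝓗) →ₗ[k] PAlg ⊗[k] (𝓗 ⊗[k] PAlg) :=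
  (cyc3 (k := k) PAlg 𝓗 PAlg).toLinearMap ∘ₗ
    TensorProduct.map (ρ.flip P ∘ₗ twistedAntipode δ)
      (TensorProduct.map (HopfAlgebra.antipode (R := k))
        (ρ.flip Q ∘ₗ HopfAlgebra.antipode (R := k)))

/-- `x ⊗ y ↦ (P ⊗ x ⊗ 1) ⊗ (1 ⊗ y ⊗ Q)`, expressing the coproduct of the double
crossed product via a linear identification `e`. -/
def dcpΔ (e : (PAlg ⊗[k] (𝓗 ⊗[k] PAlg)) ≃ₗ[k] HH) (P Q : PAlg) :
    𝓗 ⊗[k] 𝓗 →ₗ[k] HH ⊗[k] HH :=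
  TensorProduct.map
    (e.toLinearMap ∘ₗ TensorProduct.mk k PAlg (𝓗 ⊗[k] PAlg) P ∘ₗ
      (TensorProduct.mk k 𝓗 PAlg).flip 1)
    (e.toLinearMap ∘ₗ TensorProduct.mk k PAlg (𝓗 ⊗[k] PAlg) 1 ∘ₗ
      (TensorProduct.mk k 𝓗 PAlg).flip Q)

end DoubleCrossedProduct

/-! By its universal property, the double crossed product `X = P ⋊ A ⋉ Pᵐᵒᵖ` maps to any algebra
containing images of `P`, `Pᵐᵒᵖ` and `A` that satisfy its commutation relations (a *covariant
triple*). Suitable triples in `X ⊗ X`, `End P` and `Xᵐᵒᵖ` yield the coproduct, the counit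
(evaluation at `1` of the resulting action on `P`) and the para-antipode, respectively, so that
multiplicativity of these maps needs no computation; involutivity of the twisted antipode is what
makes the triple in `Xᵐᵒᵖ` covariant. Each remaining axiom is tested on normally ordered products
`p · q · a`, where it becomes a Sweedler identity for the twisted antipode. -/

section Sweedler

variable (R : Type*) {A X Y : Type*} [CommSemiring R] [AddCommMonoid A] [Module R A]
  [Coalgebra R A]

/-- The Sweedler sum `∑ f(a⁽¹⁾, a⁽²⁾)`, computed in an arbitrarily chosen representation of the
coproduct of `a`; the choice is immaterial as soon as `f` is bilinear. -/
def sweedler [AddCommMonoid X] (a : A) (f : A → A → X) : X :=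
  ∑ i ∈ (ℛ R a).index, f ((ℛ R a).left i) ((ℛ R a).right i)

variable {R}

theorem map_sweedler [AddCommMonoid X] [AddCommMonoid Y] {F : Type*} [FunLike F X Y]
    [AddMonoidHomClass F X Y] (φ : F) (a : A) (f : A → A → X) :
    φ (sweedler R a f) = sweedler R a fun x y => φ (f x y) :=
  map_sum φ _ _

theorem mul_sweedler [NonUnitalNonAssocSemiring X] (c : X) (a : A) (f : A → A → X) :
    c * sweedler R a f = sweedler R a fun x y => c * f x y :=
  Finset.mul_sum _ _ _

theorem sweedler_mul [NonUnitalNonAssocSemiring X] (a : A) (f : A → A → X) (c : X) :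
    sweedler R a f * c = sweedler R a fun x y => f x y * c :=
  Finset.sum_mul _ _ _

theorem op_sweedler [AddCommMonoid X] (a : A) (f : A → A → X) :
    MulOpposite.op (sweedler R a f) = sweedler R a fun x y => MulOpposite.op (f x y) :=
  Finset.op_sum _ _

variable [AddCommMonoid X] [Module R X]

theorem smul_sweedler (c : R) (a : A) (f : A → A → X) :
    c • sweedler R a f = sweedler R a fun x y => c • f x y :=
  Finset.smul_sum

theorem sweedler_apply [AddCommMonoid Y] [Module R Y] (a : A) (f : A → A → X →ₗ[R] Y) (t : X) :
    sweedler R a f t = sweedler R a fun x y => f x y t :=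
  LinearMap.sum_apply _ _ _

theorem tmul_sweedler [AddCommMonoid Y] [Module R Y] (t : Y) (a : A) (f : A → A → X) :
    t ⊗ₜ[R] sweedler R a f = sweedler R a fun x y => t ⊗ₜ[R] f x y :=
  TensorProduct.tmul_sum _ _ _

theorem sweedler_tmul [AddCommMonoid Y] [Module R Y] (a : A) (f : A → A → X) (t : Y) :
    sweedler R a f ⊗ₜ[R] t = sweedler R a fun x y => f x y ⊗ₜ[R] t :=
  TensorProduct.sum_tmul _ _ _

theorem map_comul_eq_sweedler (L : A ⊗[R] A →ₗ[R] X) (a : A) :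
    L (comul a) = sweedler R a fun x y => L (x ⊗ₜ y) := by
  rw [sweedler, ← map_sum, (ℛ R a).eq]

theorem comul_eq_sweedler (a : A) : comul a = sweedler R a fun x y => x ⊗ₜ[R] y :=
  map_comul_eq_sweedler LinearMap.id a

theorem sweedler_counit_left (f : A → X) (a : A)
    (hf : IsLinearMap R f := by constructor <;> intros <;> simp) :
    (sweedler R a fun x y => counit (R := R) x • f y) = f a := by
  have h := congrArg hf.mk' (sum_counit_smul (ℛ R a))
  simpa only [sweedler, map_sum, map_smul, IsLinearMap.mk'_apply] using h

theorem sweedler_counit_right (f : A → X) (a : A)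
    (hf : IsLinearMap R f := by constructor <;> intros <;> simp [add_mul]) :
    (sweedler R a fun x y => counit (R := R) y • f x) = f a := by
  have h := congrArg (hf.mk' ∘ₗ (TensorProduct.rid R A).toLinearMap) (sum_tmul_counit_eq (ℛ R a))
  simpa only [sweedler, map_sum, LinearMap.comp_apply, LinearEquiv.coe_coe,
    TensorProduct.rid_tmul, map_smul, one_smul, IsLinearMap.mk'_apply] using h

/-- A two-variable map that is linear in each variable, in the unbundled form in which the
summands of Sweedler sums arise. -/
structure IsBilinear (R : Type*) {A B X : Type*} [CommSemiring R] [AddCommMonoid A] [Module R A]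
    [AddCommMonoid B] [Module R B] [AddCommMonoid X] [Module R X] (f : A → B → X) : Prop where
  left (y : B) : IsLinearMap R fun x => f x y
  right (x : A) : IsLinearMap R (f x)

/-- The linear map on the tensor product induced by an unbundled bilinear map. -/
def IsBilinear.lift {B : Type*} [AddCommMonoid B] [Module R B] {f : A → B → X}
    (hf : IsBilinear R f) : A ⊗[R] B →ₗ[R] X :=
  TensorProduct.lift (LinearMap.mk₂ R f (fun x x' y => (hf.left y).map_add x x')
    (fun c x y => (hf.left y).map_smul c x) (fun x y y' => (hf.right x).map_add y y')
    (fun c x y => (hf.right x).map_smul c y))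

theorem sweedler_assoc (f : A → A → A → X) (a : A)
    (hf : (∀ z, IsBilinear R fun x y => f x y z) ∧ ∀ x y, IsLinearMap R (f x y) := by
      constructor <;> intros <;> (try constructor) <;> intros <;> (try constructor) <;> intros <;>
      simp [add_mul, mul_add, add_smul, smul_smul, add_tmul, tmul_add, ← smul_tmul', mul_comm]) :
    (sweedler R a fun t z => sweedler R t fun x y => f x y z) =
      sweedler R a fun x t => sweedler R t fun y z => f x y z := by
  have hyz (x : A) : IsBilinear R (f x) :=
    ⟨fun z => (hf.1 z).right x, fun y => hf.2 x y⟩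
  have hx : IsBilinear R fun x (t : A ⊗[R] A) => (hyz x).lift t := by
    refine ⟨fun t => ?_, fun x => (hyz x).lift.isLinear⟩
    induction t using TensorProduct.induction_on with
    | zero => constructor <;> simp
    | tmul y z => exact (hf.1 z).left y
    | add s t hs ht => constructor <;> simp [hs.map_add, ht.map_add, hs.map_smul, ht.map_smul,
        add_add_add_comm]
  have h := congrArg hx.lift
    (sum_tmul_tmul_eq (ℛ R a) (fun i => ℛ R ((ℛ R a).left i)) fun i => ℛ R ((ℛ R a).right i))
  simpa [sweedler, IsBilinear.lift] using h

end Sweedler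

section Hopf

open HopfAlgebra WithConv

variable {R A X : Type*} [CommSemiring R] [Semiring A] [HopfAlgebra R A]
  [AddCommMonoid X] [Module R X]

theorem sweedler_antipode_mul (a : A) :
    (sweedler R a fun x y => antipode R x * y) = counit (R := R) a • (1 : A) :=
  sum_antipode_mul_eq_smul (ℛ R a)

theorem sweedler_antipode_tmul_one_mul_comul (a : A) :
    (sweedler R a fun x y => (antipode R x ⊗ₜ[R] 1) * comul (R := R) y) = (1 : A) ⊗ₜ[R] a := by
  have h := sweedler_assoc (R := R) (fun x y z : A => (antipode R x * y) ⊗ₜ[R] z) a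
  simp only [comul_eq_sweedler, mul_sweedler, Algebra.TensorProduct.tmul_mul_tmul, one_mul]
  rw [← h]
  simp only [← sweedler_tmul, sweedler_antipode_mul, smul_tmul, ← tmul_sweedler]
  exact congrArg _ (sweedler_counit_left (fun x => x) a)

theorem comul_antipode (a : A) :
    comul (R := R) (antipode R a) =
      sweedler R a fun x y => antipode R y ⊗ₜ[R] antipode R x := by
  let flip : A →ₗ[R] A ⊗[R] A :=
    TensorProduct.map (antipode R) (antipode R) ∘ₗ (TensorProduct.comm R A A).toLinearMap ∘ₗ comul
  have flip_apply (b : A) : flip b = sweedler R b fun x y => antipode R y ⊗ₜ[R] antipode R x :=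
    map_comul_eq_sweedler (TensorProduct.map (antipode R) (antipode R) ∘ₗ
      (TensorProduct.comm R A A).toLinearMap) b
  have left_inv : toConv flip * toConv (comul (R := R) (A := A)) = 1 := by
    ext b
    have h := sweedler_assoc (R := R)
      (fun x y z : A => (antipode R y ⊗ₜ[R] antipode R x) * comul (R := R) z) b
    have h2 (x y : A) : antipode R y ⊗ₜ[R] antipode R x =
      (1 ⊗ₜ[R] antipode R x) * (antipode R y ⊗ₜ[R] 1) := by simp
    calc _ = sweedler R b fun x y => flip x * comul y := (ℛ R b).convMul_apply ..
      _ = sweedler R b fun x y => (1 ⊗ₜ[R] antipode R x) * (1 ⊗ₜ[R] y) := by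
        simp only [flip_apply, sweedler_mul, h]
        simp only [h2, mul_assoc, ← mul_sweedler, sweedler_antipode_tmul_one_mul_comul]
      _ = _ := by
        simp only [Algebra.TensorProduct.tmul_mul_tmul, one_mul, ← tmul_sweedler,
          sweedler_antipode_mul]
        simp [Algebra.TensorProduct.one_def, Algebra.algebraMap_eq_smul_one]
  have h := left_inv_eq_right_inv left_inv LinearMap.comul_right_inv
  rw [← flip_apply]
  exact congrArg (fun f => f.ofConv a) h.symm

theorem sweedler_antipode (f : A → A → X) (a : A)
    (hf : IsBilinear R f := by
      constructor <;> intros <;> constructor <;> intros <;>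
      simp [add_mul, mul_add, add_smul, smul_smul, add_tmul, tmul_add, ← smul_tmul', mul_comm]) :
    sweedler R (antipode R a) f = sweedler R a fun x y => f (antipode R y) (antipode R x) := by
  have h := congrArg hf.lift (comul_antipode (R := R) a)
  rwa [map_comul_eq_sweedler, map_sweedler] at h

end Hopf

section TwistedAntipode

open HopfAlgebra MulOpposite

variable {k 𝓗 : Type} [Field k] [Ring 𝓗] [HopfAlgebra k 𝓗] (δ : 𝓗 →ₐ[k] k)

theorem twistedAntipode_apply (h : 𝓗) :
    twistedAntipode δ h = sweedler k h fun x y => δ x • antipode k y :=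
  (map_comul_eq_sweedler (TensorProduct.lift _) h).trans rfl

/-- The twisted antipode as an algebra map to the opposite algebra. -/
def twistedAntipodeOp : 𝓗 →ₐ[k] 𝓗ᵐᵒᵖ :=
  (antipodeAlgHomOp k 𝓗).comp <| (Algebra.TensorProduct.lid k 𝓗).toAlgHom.comp <|
    (Algebra.TensorProduct.map δ (AlgHom.id k 𝓗)).comp (Bialgebra.comulAlgHom k 𝓗)

theorem twistedAntipodeOp_apply (h : 𝓗) :
    twistedAntipodeOp δ h = op (twistedAntipode δ h) := by
  change op (antipode k (TensorProduct.lid k 𝓗 (TensorProduct.map _ _ (comul h)))) = _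
  simp [comul_eq_sweedler, map_sweedler, twistedAntipode_apply]

theorem twistedAntipode_one : twistedAntipode δ (1 : 𝓗) = 1 :=
  op_injective (by rw [← twistedAntipodeOp_apply, map_one, op_one])

theorem twistedAntipode_mul (g h : 𝓗) :
    twistedAntipode δ (g * h) = twistedAntipode δ h * twistedAntipode δ g :=
  op_injective (by simp only [op_mul, ← twistedAntipodeOp_apply, map_mul])

theorem sweedler_twistedAntipode {X : Type*} [AddCommMonoid X] [Module k X] (f : 𝓗 → 𝓗 → X)
    (h : 𝓗)
    (hf : IsBilinear k f := by
      constructor <;> intros <;> constructor <;> intros <;>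
      simp [add_mul, mul_add, add_smul, smul_smul, add_tmul, tmul_add, ← smul_tmul', mul_comm]) :
    sweedler k (twistedAntipode δ h) f =
      sweedler k h fun x y => f (antipode k y) (twistedAntipode δ x) := by
  have hassoc := sweedler_assoc (R := k)
    (fun x y z : 𝓗 => δ x • hf.lift (antipode k z ⊗ₜ antipode k y)) h
  calc sweedler k (twistedAntipode δ h) f = hf.lift (comul (twistedAntipode δ h)) :=
        (map_comul_eq_sweedler hf.lift _).symm
    _ = sweedler k h fun x t => sweedler k t fun y z =>
          δ x • hf.lift (antipode k z ⊗ₜ antipode k y) := by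
        simp only [twistedAntipode_apply, map_sweedler, map_smul, comul_antipode, smul_sweedler]
    _ = sweedler k h fun t z => hf.lift (antipode k z ⊗ₜ twistedAntipode δ t) := by
        simp only [← hassoc, twistedAntipode_apply, tmul_sweedler, tmul_smul, map_sweedler,
          map_smul]

theorem sweedler_twistedAntipode_mul (h : 𝓗) :
    (sweedler k h fun x y => twistedAntipode δ x * y) = δ h • (1 : 𝓗) := by
  have hassoc := sweedler_assoc (R := k) (fun x y z : 𝓗 => δ x • (antipode k y * z)) h
  simp only [twistedAntipode_apply, sweedler_mul, smul_mul_assoc]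
  rw [hassoc]
  simp only [← smul_sweedler, sweedler_antipode_mul, smul_comm (δ _)]
  exact sweedler_counit_right (fun x => δ x • (1 : 𝓗)) h
    ⟨by simp [add_smul], by simp [mul_smul]⟩

theorem sweedler_twistedAntipode_mul_swap (hδ : Function.Involutive (twistedAntipode δ)) (h : 𝓗) :
    (sweedler k h fun x y => twistedAntipode δ y * x) = δ h • (1 : 𝓗) := by
  have := congrArg (twistedAntipode δ) (sweedler_twistedAntipode_mul δ h)
  simpa only [map_sweedler, twistedAntipode_mul, hδ _, map_smul, twistedAntipode_one] using this

end TwistedAntipode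

open MulOpposite

section CovariantTriple

variable {R A P X Y : Type*} [CommSemiring R] [Semiring A] [Bialgebra R A] [Semiring P]
  [Algebra R P] [Semiring X] [Algebra R X] [Semiring Y] [Algebra R Y]

/-- The compatibility of an action `ρ` of a bialgebra on an algebra with the algebra structure,
making the latter a module algebra. -/
structure IsModuleAlgebra (ρ : A →ₐ[R] Module.End R P) : Prop where
  map_one (a : A) : ρ a 1 = counit (R := R) a • (1 : P)
  map_mul (a : A) (p q : P) : ρ a (p * q) = sweedler R a fun x y => ρ x p * ρ y q

/-- Algebra maps from `P`, `Pᵐᵒᵖ` and `A` to `X` satisfying the commutation relations of the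
double crossed product `P ⋊ A ⋉ Pᵐᵒᵖ`: a representation of the double crossed product in `X`,
given on generators. -/
structure CovariantTriple (ρ : A →ₐ[R] Module.End R P) (X : Type*) [Semiring X]
    [Algebra R X] where
  src : P →ₐ[R] X
  tgt : Pᵐᵒᵖ →ₐ[R] X
  mid : A →ₐ[R] X
  src_comm_tgt (p : P) (q : Pᵐᵒᵖ) : Commute (src p) (tgt q)
  mid_mul_src (a : A) (p : P) :
    mid a * src p = sweedler R a fun x y => src (ρ x p) * mid y
  mid_mul_tgt (a : A) (q : P) :
    mid a * tgt (op q) = sweedler R a fun x y => tgt (op (ρ y q)) * mid x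

namespace CovariantTriple

variable {ρ : A →ₐ[R] Module.End R P} (C : CovariantTriple ρ X)

/-- The multiplication map `p ⊗ a ⊗ q ↦ p · q · a`, writing elements of `X` in normal order. -/
def normalOrder : P ⊗[R] (A ⊗[R] P) →ₗ[R] X :=
  LinearMap.mul' R X ∘ₗ TensorProduct.map C.src.toLinearMap
    (LinearMap.mul' R X ∘ₗ
      TensorProduct.map (C.tgt.toLinearMap ∘ₗ (opLinearEquiv R).toLinearMap) C.mid.toLinearMap ∘ₗ
        (TensorProduct.comm R A P).toLinearMap)

@[simp]
theorem normalOrder_tmul (p q : P) (a : A) :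
    C.normalOrder (p ⊗ₜ (a ⊗ₜ q)) = C.src p * (C.tgt (op q) * C.mid a) :=
  rfl

variable {C}

theorem induction_on (hC : Function.Surjective C.normalOrder) {motive : X → Prop} (x : X)
    (add : ∀ x y, motive x → motive y → motive (x + y))
    (mul : ∀ p q a, motive (C.src p * (C.tgt (op q) * C.mid a))) : motive x := by
  have zero : motive 0 := by simpa using mul 0 0 0
  obtain ⟨t, rfl⟩ := hC x
  induction t with
  | zero => rwa [map_zero]
  | add s t hs ht => rw [map_add]; exact add _ _ hs ht
  | tmul p t =>
    induction t with
    | zero => rwa [tmul_zero, map_zero]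
    | add s t hs ht => rw [tmul_add, map_add]; exact add _ _ hs ht
    | tmul a q => exact mul p q a

theorem algHom_ext (hC : Function.Surjective C.normalOrder) {f g : X →ₐ[R] Y}
    (src : ∀ p, f (C.src p) = g (C.src p)) (tgt : ∀ q, f (C.tgt q) = g (C.tgt q))
    (mid : ∀ a, f (C.mid a) = g (C.mid a)) : f = g := by
  ext x
  induction x using induction_on hC with
  | add x y hx hy => rw [map_add, map_add, hx, hy]
  | mul p q a => simp only [map_mul, src, tgt, mid]

theorem mem_subalgebra (hC : Function.Surjective C.normalOrder) (s : Subalgebra R X)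
    (src : ∀ p, C.src p ∈ s) (tgt : ∀ q, C.tgt q ∈ s) (mid : ∀ a, C.mid a ∈ s) (x : X) :
    x ∈ s := by
  induction x using induction_on hC with
  | add x y hx hy => exact add_mem hx hy
  | mul p q a => exact mul_mem (src p) (mul_mem (tgt _) (mid a))

section Lift

variable (hC : Function.Bijective C.normalOrder) (E : CovariantTriple ρ Y)

/-- The linear map underlying `CovariantTriple.lift`. -/
def liftLinear : X →ₗ[R] Y :=
  E.normalOrder ∘ₗ (LinearEquiv.ofBijective C.normalOrder hC).symm.toLinearMap

theorem liftLinear_normalOrder (t : P ⊗[R] (A ⊗[R] P)) :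
    liftLinear hC E (C.normalOrder t) = E.normalOrder t :=
  congrArg E.normalOrder ((LinearEquiv.ofBijective C.normalOrder hC).symm_apply_apply t)

theorem liftLinear_src_mul_tgt_mul_mid (p q : P) (a : A) :
    liftLinear hC E (C.src p * (C.tgt (op q) * C.mid a)) =
      E.src p * (E.tgt (op q) * E.mid a) :=
  liftLinear_normalOrder hC E (p ⊗ₜ (a ⊗ₜ q))

theorem liftLinear_src (p : P) : liftLinear hC E (C.src p) = E.src p := by
  simpa using liftLinear_src_mul_tgt_mul_mid hC E p 1 1

theorem liftLinear_tgt (q : Pᵐᵒᵖ) : liftLinear hC E (C.tgt q) = E.tgt q := by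
  simpa using liftLinear_src_mul_tgt_mul_mid hC E 1 q.unop 1

theorem liftLinear_mid (a : A) : liftLinear hC E (C.mid a) = E.mid a := by
  simpa using liftLinear_src_mul_tgt_mul_mid hC E 1 1 a

theorem liftLinear_src_mul (p : P) (x : X) :
    liftLinear hC E (C.src p * x) = E.src p * liftLinear hC E x := by
  induction x using induction_on hC.2 with
  | add x y hx hy => rw [mul_add, map_add, map_add, mul_add, hx, hy]
  | mul p' q a =>
    rw [← mul_assoc, ← map_mul, liftLinear_src_mul_tgt_mul_mid,
      liftLinear_src_mul_tgt_mul_mid, map_mul, mul_assoc]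

theorem liftLinear_tgt_mul (q : Pᵐᵒᵖ) (x : X) :
    liftLinear hC E (C.tgt q * x) = E.tgt q * liftLinear hC E x := by
  induction x using induction_on hC.2 with
  | add x y hx hy => rw [mul_add, map_add, map_add, mul_add, hx, hy]
  | mul p q' a =>
    rw [(C.src_comm_tgt p q).symm.left_comm, ← mul_assoc (C.tgt q), ← map_mul,
      ← op_unop (q * op q'), liftLinear_src_mul_tgt_mul_mid,
      liftLinear_src_mul_tgt_mul_mid, op_unop, map_mul, mul_assoc,
      (E.src_comm_tgt p q).left_comm]

theorem liftLinear_mid_mul (a : A) (x : X) :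
    liftLinear hC E (C.mid a * x) = E.mid a * liftLinear hC E x := by
  induction x using induction_on hC.2 generalizing a with
  | add x y hx hy => rw [mul_add, map_add, map_add, mul_add, hx, hy]
  | mul p q b =>
    have mul_mid (a : A) : liftLinear hC E (C.mid a * C.mid b) = E.mid a * E.mid b := by
      rw [← map_mul, liftLinear_mid, map_mul]
    have mul_tgt_mid (a : A) : liftLinear hC E (C.mid a * (C.tgt (op q) * C.mid b)) =
        E.mid a * (E.tgt (op q) * E.mid b) := by
      rw [← mul_assoc (C.mid a), ← mul_assoc (E.mid a), C.mid_mul_tgt, E.mid_mul_tgt]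
      simp only [sweedler_mul, map_sweedler, mul_assoc, liftLinear_tgt_mul, mul_mid]
    rw [liftLinear_src_mul_tgt_mul_mid, ← mul_assoc (C.mid a), ← mul_assoc (E.mid a), C.mid_mul_src,
      E.mid_mul_src]
    simp only [sweedler_mul, map_sweedler, mul_assoc, liftLinear_src_mul, mul_tgt_mid]

/-- The universal property of the double crossed product: an algebra in which normal ordering
with respect to a covariant triple `C` is bijective maps to every other covariant triple. -/
def lift : X →ₐ[R] Y :=
  AlgHom.ofLinearMap (liftLinear hC E)
    (by rw [← map_one C.src, liftLinear_src, map_one])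
    (fun x y => by
      induction x using induction_on hC.2 with
      | add x x' hx hx' => rw [add_mul, map_add, map_add, add_mul, hx, hx']
      | mul p q a =>
        rw [liftLinear_src_mul_tgt_mul_mid, mul_assoc, mul_assoc, liftLinear_src_mul,
          liftLinear_tgt_mul, liftLinear_mid_mul, mul_assoc, mul_assoc])

@[simp]
theorem lift_src (p : P) : lift hC E (C.src p) = E.src p :=
  liftLinear_src hC E p

@[simp]
theorem lift_tgt (q : Pᵐᵒᵖ) : lift hC E (C.tgt q) = E.tgt q :=
  liftLinear_tgt hC E q

@[simp]
theorem lift_mid (a : A) : lift hC E (C.mid a) = E.mid a :=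
  liftLinear_mid hC E a

end Lift

end CovariantTriple

end CovariantTriple

namespace CovariantTriple

section Bialgebra

variable {R A P X : Type*} [CommSemiring R] [Semiring A] [Bialgebra R A] [Semiring P]
  [Algebra R P] [Semiring X] [Algebra R X] {ρ : A →ₐ[R] Module.End R P}

theorem map_mid_comul (C : CovariantTriple ρ X) (a : A) :
    TensorProduct.map C.mid.toLinearMap C.mid.toLinearMap (comul (R := R) a) =
      sweedler R a fun x y => C.mid x ⊗ₜ[R] C.mid y :=
  map_comul_eq_sweedler _ a

/-- The covariant triple in `X ⊗ X` that induces the coproduct. -/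
def comulTriple (C : CovariantTriple ρ X) : CovariantTriple ρ (X ⊗[R] X) where
  src := Algebra.TensorProduct.includeLeft.comp C.src
  tgt := Algebra.TensorProduct.includeRight.comp C.tgt
  mid := (Algebra.TensorProduct.map C.mid C.mid).comp (Bialgebra.comulAlgHom R A)
  src_comm_tgt p q := by simp [Commute, SemiconjBy]
  mid_mul_src a p := by
    have h := sweedler_assoc (R := R) (fun x y z => (C.src (ρ x p) * C.mid y) ⊗ₜ[R] C.mid z) a
    simp only [← sweedler_tmul, ← mid_mul_src] at h
    simp [comul_eq_sweedler, map_sweedler, sweedler_mul, mul_sweedler, h]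
  mid_mul_tgt a q := by
    have h := sweedler_assoc (R := R)
      (fun x y z => C.mid x ⊗ₜ[R] (C.tgt (op (ρ z q)) * C.mid y)) a
    simp only [← tmul_sweedler, ← mid_mul_tgt] at h
    simp [comul_eq_sweedler, map_sweedler, sweedler_mul, mul_sweedler, h]

/-- The covariant triple of left multiplications, right multiplications and the action itself in
the endomorphisms of a module algebra. It is the anchor of the double crossed product and induces
the counit through evaluation at `1`. -/
def anchorTriple (hρ : IsModuleAlgebra ρ) : CovariantTriple ρ (Module.End R P) where
  src := Algebra.lmul R P
  tgt := Algebra.lsmul R R P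
  mid := ρ
  src_comm_tgt p q := by ext r; simp [mul_assoc]
  mid_mul_src a p := by
    ext r
    exact (hρ.map_mul a p r).trans (by simp [sweedler])
  mid_mul_tgt a q := by
    ext r
    exact (hρ.map_mul a r q).trans (by simp [sweedler])

end Bialgebra

section Hopf

open HopfAlgebra

variable {R A P X : Type*} [CommSemiring R] [Semiring A] [HopfAlgebra R A] [Semiring P]
  [Algebra R P] [Semiring X] [Algebra R X] {ρ : A →ₐ[R] Module.End R P}

theorem mid_antipode_mul_tgt (C : CovariantTriple ρ X) (a : A) (q : P) :
    C.mid (antipode R a) * C.tgt (op q) =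
      sweedler R a fun x y => C.tgt (op (ρ (antipode R x) q)) * C.mid (antipode R y) :=
  (C.mid_mul_tgt _ _).trans (sweedler_antipode _ a)

theorem sweedler_mid_antipode_mul_tgt_mul_mid (C : CovariantTriple ρ X) (a : A) (q : P) :
    (sweedler R a fun x y => C.mid (antipode R x) * (C.tgt (op q) * C.mid y)) =
      C.tgt (op (ρ (antipode R a) q)) := by
  have hassoc := sweedler_assoc (R := R)
    (fun x y z => C.tgt (op (ρ (antipode R x) q)) * C.mid (antipode R y * z)) a
  calc _ = sweedler R a fun t z => sweedler R t fun x y =>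
        C.tgt (op (ρ (antipode R x) q)) * C.mid (antipode R y * z) := by
        simp only [← mul_assoc (C.mid _), mid_antipode_mul_tgt, sweedler_mul, map_mul, mul_assoc]
    _ = sweedler R a fun x t => counit (R := R) t • C.tgt (op (ρ (antipode R x) q)) := by
        simp only [hassoc, ← mul_sweedler, ← map_sweedler, sweedler_antipode_mul, map_smul, map_one,
          mul_smul_comm, mul_one]
    _ = _ := sweedler_counit_right (fun x => C.tgt (op (ρ (antipode R x) q))) a

end Hopf

section Twisted

open HopfAlgebra

variable {k 𝓗 : Type} {P X : Type*} [Field k] [Ring 𝓗] [HopfAlgebra k 𝓗] [Semiring P]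
  [Algebra k P] [Semiring X] [Algebra k X] {ρ : 𝓗 →ₐ[k] Module.End k P} (C : CovariantTriple ρ X)
  (δ : 𝓗 →ₐ[k] k)

theorem sweedler_mid_twistedAntipode_mul_tgt_mul_mid (h : 𝓗) (q : P) :
    (sweedler k h fun x y => C.mid (twistedAntipode δ x) * (C.tgt (op q) * C.mid y)) =
      C.tgt (op (ρ (twistedAntipode δ h) q)) := by
  have hassoc := sweedler_assoc (R := k)
    (fun x y z => δ x • (C.mid (antipode k y) * (C.tgt (op q) * C.mid z))) h
  calc _ = sweedler k h fun t z => sweedler k t fun x y =>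
        δ x • (C.mid (antipode k y) * (C.tgt (op q) * C.mid z)) := by
        simp only [twistedAntipode_apply, map_sweedler, sweedler_mul, map_smul, smul_mul_assoc]
    _ = sweedler k h fun x t => δ x • C.tgt (op (ρ (antipode k t) q)) := by
        simp only [hassoc, ← smul_sweedler, sweedler_mid_antipode_mul_tgt_mul_mid]
    _ = _ := by
        simp only [twistedAntipode_apply, map_sweedler, sweedler_apply, op_sweedler, map_smul,
          LinearMap.smul_apply, op_smul]

theorem mid_twistedAntipode_mul_src (h : 𝓗) (p : P) :
    C.mid (twistedAntipode δ h) * C.src p =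
      sweedler k h fun x y => C.src (ρ (antipode k y) p) * C.mid (twistedAntipode δ x) :=
  (C.mid_mul_src _ _).trans (sweedler_twistedAntipode δ _ h)

theorem mid_twistedAntipode_mul_tgt (h : 𝓗) (q : P) :
    C.mid (twistedAntipode δ h) * C.tgt (op q) =
      sweedler k h fun x y => C.tgt (op (ρ (twistedAntipode δ x) q)) * C.mid (antipode k y) :=
  (C.mid_mul_tgt _ _).trans (sweedler_twistedAntipode δ _ h)

theorem src_mul_mid_twistedAntipode (p : P) (h : 𝓗) :
    C.src p * C.mid (twistedAntipode δ h) =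
      sweedler k h fun x y => C.mid (twistedAntipode δ x) * C.src (ρ y p) := by
  have hassoc := sweedler_assoc (R := k)
    (fun x y z => C.src (ρ (antipode k y * z) p) * C.mid (twistedAntipode δ x)) h
  calc _ = sweedler k h fun x t => counit (R := k) t • (C.src p * C.mid (twistedAntipode δ x)) :=
        (sweedler_counit_right (fun x => C.src p * C.mid (twistedAntipode δ x)) h
          ⟨by simp [mul_add], by simp⟩).symm
    _ = sweedler k h fun x t => sweedler k t fun y z =>
          C.src (ρ (antipode k y * z) p) * C.mid (twistedAntipode δ x) := by
        simp only [← sweedler_mul, ← map_sweedler, ← sweedler_apply, sweedler_antipode_mul,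
          map_smul, map_one, LinearMap.smul_apply, Module.End.one_apply, smul_mul_assoc]
    _ = _ := by
        rw [← hassoc]
        simp only [mid_twistedAntipode_mul_src, map_mul, Module.End.mul_apply]

theorem tgt_mul_mid_twistedAntipode (hδ : Function.Involutive (twistedAntipode δ)) (q : P)
    (h : 𝓗) :
    C.tgt (op q) * C.mid (twistedAntipode δ h) =
      sweedler k h fun x y => C.mid (twistedAntipode δ y) * C.tgt (op (ρ x q)) := by
  have hassoc := sweedler_assoc (R := k)
    (fun x y z => C.tgt (op (ρ (twistedAntipode δ y * x) q)) * C.mid (antipode k z)) h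
  calc _ = sweedler k h fun t z => δ t • (C.tgt (op q) * C.mid (antipode k z)) := by
        simp only [twistedAntipode_apply, map_sweedler, mul_sweedler, map_smul, mul_smul_comm]
    _ = sweedler k h fun t z => sweedler k t fun x y =>
          C.tgt (op (ρ (twistedAntipode δ y * x) q)) * C.mid (antipode k z) := by
        simp only [← sweedler_mul, ← map_sweedler, ← sweedler_apply, ← op_sweedler,
          sweedler_twistedAntipode_mul_swap δ hδ, map_smul, map_one, LinearMap.smul_apply,
          Module.End.one_apply, op_smul, smul_mul_assoc]
    _ = _ := by
        rw [hassoc]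
        simp only [mid_twistedAntipode_mul_tgt, map_mul, Module.End.mul_apply]

/-- The covariant triple in `Xᵐᵒᵖ` that induces the para-antipode. -/
def opTriple (hδ : Function.Involutive (twistedAntipode δ)) : CovariantTriple ρ Xᵐᵒᵖ where
  src := AlgHom.opComm.symm C.tgt
  tgt := AlgHom.op C.src
  mid := (AlgHom.op C.mid).comp (twistedAntipodeOp δ)
  src_comm_tgt p q := congrArg op (C.src_comm_tgt q.unop (op p)).eq
  mid_mul_src h p := by
    simpa [twistedAntipodeOp_apply, op_sweedler] using
      congrArg op (C.tgt_mul_mid_twistedAntipode δ hδ p h)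
  mid_mul_tgt h q := by
    simpa [twistedAntipodeOp_apply, op_sweedler] using
      congrArg op (C.src_mul_mid_twistedAntipode δ q h)

end Twisted

end CovariantTriple

namespace PreBialgebroid

variable {k H R : Type} [Field k] [Ring H] [Algebra k H] [Ring R] [Algebra k R]

@[simp]
theorem mulL_tmul (f : H →ₗ[k] H) (x y : H) : mulL f (x ⊗ₜ y) = f x * y :=
  rfl

@[simp]
theorem mulR_tmul (f : H →ₗ[k] H) (x y : H) : mulR f (x ⊗ₜ y) = f y * x :=
  rfl

variable (D : PreBialgebroid k H R)

@[simp]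
theorem tau2_tmul (T : H →ₗ[k] H) (x y : H) :
    D.tau2 T (x ⊗ₜ y) = D.Δ (T x) * (y ⊗ₜ 1) :=
  rfl

theorem π2_β_mul_tmul (r : R) (x y : H) :
    D.π2 ((D.β r * x) ⊗ₜ y) = D.π2 (x ⊗ₜ (D.α r * y)) :=
  (Submodule.Quotient.eq _).2 (Submodule.subset_span ⟨r, x, y, rfl⟩)

/-- The elements `β r ⊗ 1 - 1 ⊗ α r`, which generate `rel2` as a right ideal. -/
def relator (r : R) : H ⊗[k] H :=
  D.β r ⊗ₜ 1 - 1 ⊗ₜ D.α r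

theorem relator_mul_tmul (r : R) (x y : H) :
    D.relator r * (x ⊗ₜ y) = (D.β r * x) ⊗ₜ y - x ⊗ₜ (D.α r * y) := by
  simp [relator, sub_mul]

theorem relator_mul_mem_rel2 (r : R) (t : H ⊗[k] H) : D.relator r * t ∈ D.rel2 := by
  induction t with
  | zero => rw [mul_zero]; exact zero_mem _
  | add s t hs ht => rw [mul_add]; exact add_mem hs ht
  | tmul x y => exact Submodule.subset_span ⟨r, x, y, D.relator_mul_tmul r x y⟩

theorem rel2_le {N : Submodule k (H ⊗[k] H)} (h : ∀ r x y, D.relator r * (x ⊗ₜ y) ∈ N) :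
    D.rel2 ≤ N := by
  refine Submodule.span_le.2 ?_
  rintro _ ⟨r, x, y, rfl⟩
  exact D.relator_mul_tmul r x y ▸ h r x y

theorem mem_rel2_mul {z : H ⊗[k] H} (hz : z ∈ D.rel2) (t : H ⊗[k] H) : z * t ∈ D.rel2 := by
  suffices D.rel2 ≤ D.rel2.comap (LinearMap.mulRight k t) from this hz
  refine D.rel2_le fun r x y => ?_
  rw [Submodule.mem_comap, LinearMap.mulRight_apply, mul_assoc]
  exact D.relator_mul_mem_rel2 r _

theorem mul_mem_rel2 {s : H ⊗[k] H} (hs : ∀ r, s * D.relator r ∈ D.rel2) {z : H ⊗[k] H}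
    (hz : z ∈ D.rel2) : s * z ∈ D.rel2 := by
  suffices D.rel2 ≤ D.rel2.comap (LinearMap.mulLeft k s) from this hz
  refine D.rel2_le fun r x y => ?_
  rw [Submodule.mem_comap, LinearMap.mulLeft_apply, ← mul_assoc]
  exact D.mem_rel2_mul (hs r) _

/-- The Takeuchi product: the elements of `H ⊗ H` whose left multiplication descends to the
quotient `H ⊗_R H`. -/
def takeuchi : Subalgebra k (H ⊗[k] H) where
  carrier := {t | ∀ r, t * D.relator r ∈ D.rel2}
  mul_mem' hs ht r := by
    rw [mul_assoc]
    exact D.mul_mem_rel2 hs (ht r)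
  add_mem' hs ht r := by
    rw [add_mul]
    exact add_mem (hs r) (ht r)
  algebraMap_mem' c r := by
    rw [← Algebra.smul_def]
    simpa using D.rel2.smul_mem c (D.relator_mul_mem_rel2 r 1)

theorem mem_takeuchi {t : H ⊗[k] H} :
    t ∈ D.takeuchi ↔ ∀ r, D.π2 (t * D.β r ⊗ₜ 1) = D.π2 (t * 1 ⊗ₜ D.α r) := by
  refine forall_congr' fun r => ?_
  rw [relator, mul_sub]
  exact (Submodule.Quotient.eq _).symm

end PreBialgebroid

namespace CovariantTriple

section StructureMaps

variable {R A P X : Type*} [CommSemiring R] [Semiring A] [Bialgebra R A] [Semiring P]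
  [Algebra R P] [Semiring X] [Algebra R X] {ρ : A →ₐ[R] Module.End R P}
  {C : CovariantTriple ρ X} (hC : Function.Bijective C.normalOrder)

/-- The coproduct of a double crossed product `X`, lifted to an algebra map to `X ⊗ X`. -/
def comulHom : X →ₐ[R] X ⊗[R] X :=
  lift hC C.comulTriple

@[simp]
theorem comulHom_src (p : P) : comulHom hC (C.src p) = C.src p ⊗ₜ 1 :=
  lift_src hC _ p

@[simp]
theorem comulHom_tgt (q : Pᵐᵒᵖ) : comulHom hC (C.tgt q) = 1 ⊗ₜ C.tgt q :=
  lift_tgt hC _ q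

theorem comulHom_mid (a : A) :
    comulHom hC (C.mid a) = sweedler R a fun x y => C.mid x ⊗ₜ C.mid y :=
  (lift_mid hC _ a).trans (C.map_mid_comul a)

theorem comulHom_src_mul_tgt_mul_mid (p q : P) (a : A) :
    comulHom hC (C.src p * (C.tgt (op q) * C.mid a)) =
      sweedler R a fun x y => (C.src p * C.mid x) ⊗ₜ (C.tgt (op q) * C.mid y) := by
  simp [comulHom_mid, mul_sweedler]

theorem comulHom_coassoc (x : X) :
    TensorProduct.assoc R X X X ((comulHom hC).toLinearMap.rTensor X (comulHom hC x)) =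
      (comulHom hC).toLinearMap.lTensor X (comulHom hC x) := by
  let Δ := comulHom hC
  have h : ((Algebra.TensorProduct.assoc R R R X X X).toAlgHom.comp
      ((Algebra.TensorProduct.map Δ (AlgHom.id R X)).comp Δ)) =
      (Algebra.TensorProduct.map (AlgHom.id R X) Δ).comp Δ := by
    refine algHom_ext hC.2 (fun p => ?_) (fun q => ?_) fun a => ?_
    · simp [Δ, Algebra.TensorProduct.one_def]
    · simp [Δ, Algebra.TensorProduct.one_def]
    · have hassoc := sweedler_assoc (R := R)
        (fun x y z => C.mid x ⊗ₜ[R] (C.mid y ⊗ₜ[R] C.mid z)) a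
      simpa [Δ, comulHom_mid, map_sweedler, sweedler_tmul, tmul_sweedler] using hassoc
  exact DFunLike.congr_fun h x

/-- The action of the double crossed product `X` on its base algebra. -/
def anchor (hρ : IsModuleAlgebra ρ) : X →ₐ[R] Module.End R P :=
  lift hC (anchorTriple hρ)

/-- The counit of the double crossed product `X`, evaluation of the anchor at `1`. -/
def counitMap (hρ : IsModuleAlgebra ρ) : X →ₗ[R] P :=
  (anchor hC hρ).toLinearMap.flip 1

variable (hρ : IsModuleAlgebra ρ)

theorem counitMap_one : counitMap hC hρ 1 = 1 := by
  simp [counitMap]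

theorem counitMap_mul (x y : X) :
    counitMap hC hρ (x * y) = anchor hC hρ x (counitMap hC hρ y) := by
  simp [counitMap]

@[simp]
theorem counitMap_src_mul (p : P) (x : X) :
    counitMap hC hρ (C.src p * x) = p * counitMap hC hρ x :=
  (counitMap_mul hC hρ _ x).trans
    (LinearMap.congr_fun (lift_src hC (anchorTriple hρ) p) (counitMap hC hρ x))

@[simp]
theorem counitMap_tgt_mul (q : P) (x : X) :
    counitMap hC hρ (C.tgt (op q) * x) = counitMap hC hρ x * q :=
  (counitMap_mul hC hρ _ x).trans
    (LinearMap.congr_fun (lift_tgt hC (anchorTriple hρ) (op q)) (counitMap hC hρ x))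

@[simp]
theorem counitMap_mid_mul (a : A) (x : X) :
    counitMap hC hρ (C.mid a * x) = ρ a (counitMap hC hρ x) :=
  (counitMap_mul hC hρ _ x).trans
    (LinearMap.congr_fun (lift_mid hC (anchorTriple hρ) a) (counitMap hC hρ x))

@[simp]
theorem counitMap_mid (a : A) :
    counitMap hC hρ (C.mid a) = counit (R := R) a • (1 : P) := by
  simpa [counitMap_one, hρ.map_one] using counitMap_mid_mul hC hρ a 1

@[simp]
theorem counitMap_tgt (q : P) : counitMap hC hρ (C.tgt (op q)) = q := by
  simpa [counitMap_one] using counitMap_tgt_mul hC hρ q 1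

end StructureMaps

end CovariantTriple

namespace CovariantTriple

section ParaAntipode

open HopfAlgebra

variable {k 𝓗 : Type} {P X : Type*} [Field k] [Ring 𝓗] [HopfAlgebra k 𝓗] [Semiring P]
  [Algebra k P] [Semiring X] [Algebra k X] {ρ : 𝓗 →ₐ[k] Module.End k P} {C : CovariantTriple ρ X}
  (hC : Function.Bijective C.normalOrder) (δ : 𝓗 →ₐ[k] k)
  (hδ : Function.Involutive (twistedAntipode δ))

/-- The para-antipode of the double crossed product `X`, the anti-endomorphism that exchanges
source and target and restricts to the twisted antipode. -/
def paraAntipode : X →ₗ[k] X :=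
  (opLinearEquiv k).symm.toLinearMap ∘ₗ (lift hC (C.opTriple δ hδ)).toLinearMap

theorem paraAntipode_one : paraAntipode hC δ hδ 1 = 1 := by
  simp [paraAntipode]

theorem paraAntipode_mul (x y : X) :
    paraAntipode hC δ hδ (x * y) = paraAntipode hC δ hδ y * paraAntipode hC δ hδ x := by
  simp [paraAntipode]

@[simp]
theorem paraAntipode_src (p : P) : paraAntipode hC δ hδ (C.src p) = C.tgt (op p) :=
  congrArg unop (lift_src hC (C.opTriple δ hδ) p)

@[simp]
theorem paraAntipode_tgt (q : P) : paraAntipode hC δ hδ (C.tgt (op q)) = C.src q :=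
  congrArg unop (lift_tgt hC (C.opTriple δ hδ) (op q))

@[simp]
theorem paraAntipode_mid (h : 𝓗) :
    paraAntipode hC δ hδ (C.mid h) = C.mid (twistedAntipode δ h) :=
  congrArg unop <| (lift_mid hC (C.opTriple δ hδ) h).trans <|
    congrArg (AlgHom.op C.mid) (twistedAntipodeOp_apply δ h)

theorem paraAntipode_src_mul_tgt_mul_mid (p q : P) (h : 𝓗) :
    paraAntipode hC δ hδ (C.src p * (C.tgt (op q) * C.mid h)) =
      C.mid (twistedAntipode δ h) * (C.src q * C.tgt (op p)) := by
  simp [paraAntipode_mul, mul_assoc]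

theorem paraAntipode_involutive : Function.Involutive (paraAntipode hC δ hδ) := by
  intro x
  induction x using induction_on hC.2 with
  | add x y hx hy => rw [map_add, map_add, hx, hy]
  | mul p q h =>
    rw [paraAntipode_src_mul_tgt_mul_mid, paraAntipode_mul, paraAntipode_mul, paraAntipode_src,
      paraAntipode_tgt, paraAntipode_mid, hδ h, mul_assoc]

end ParaAntipode

section Bialgebroid

variable {k A P X : Type} [Field k] [Ring A] [Bialgebra k A] [Ring P] [Algebra k P]
  [Ring X] [Algebra k X] {ρ : A →ₐ[k] Module.End k P} {C : CovariantTriple ρ X}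
  (hC : Function.Bijective C.normalOrder) (hρ : IsModuleAlgebra ρ)

/-- The structure maps of the double crossed product `X` as a bialgebroid over `P`. -/
@[simps]
def preBialgebroid : PreBialgebroid k X P where
  α := C.src
  β := C.tgt.toLinearMap ∘ₗ (opLinearEquiv k).toLinearMap
  β_one := map_one C.tgt
  β_mul p q := map_mul C.tgt (op q) (op p)
  αβ_comm p q := C.src_comm_tgt p (op q)
  Δ := (comulHom hC).toLinearMap
  ε := counitMap hC hρ

theorem π2_tgt_mul_tmul (q : P) (x y : X) :
    (preBialgebroid hC hρ).π2 ((C.tgt (op q) * x) ⊗ₜ y) =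
      (preBialgebroid hC hρ).π2 (x ⊗ₜ (C.src q * y)) :=
  (preBialgebroid hC hρ).π2_β_mul_tmul q x y

theorem comulHom_mid_mem_takeuchi (a : A) :
    comulHom hC (C.mid a) ∈ (preBialgebroid hC hρ).takeuchi := by
  let π := (preBialgebroid hC hρ).π2
  refine (PreBialgebroid.mem_takeuchi _).2 fun r => ?_
  have hassoc := sweedler_assoc (R := k)
    (fun x y z => π (C.mid x ⊗ₜ[k] (C.src (ρ y r) * C.mid z))) a
  calc π (comulHom hC (C.mid a) * C.tgt (op r) ⊗ₜ 1)
      = sweedler k a fun t z => sweedler k t fun x y =>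
          π ((C.tgt (op (ρ y r)) * C.mid x) ⊗ₜ C.mid z) := by
        simp only [comulHom_mid, sweedler_mul, Algebra.TensorProduct.tmul_mul_tmul, mul_one,
          mid_mul_tgt, sweedler_tmul, map_sweedler]
    _ = sweedler k a fun x t => sweedler k t fun y z =>
          π (C.mid x ⊗ₜ (C.src (ρ y r) * C.mid z)) := by
        simp only [π, π2_tgt_mul_tmul] at hassoc ⊢
        exact hassoc
    _ = π (comulHom hC (C.mid a) * 1 ⊗ₜ C.src r) := by
        simp only [comulHom_mid, sweedler_mul, Algebra.TensorProduct.tmul_mul_tmul, mul_one,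
          mid_mul_src, tmul_sweedler, map_sweedler]

theorem comulHom_mem_takeuchi (x : X) :
    comulHom hC x ∈ (preBialgebroid hC hρ).takeuchi := by
  refine mem_subalgebra hC.2 ((preBialgebroid hC hρ).takeuchi.comap (comulHom hC))
    (fun p => ?_) (fun q => ?_) (comulHom_mid_mem_takeuchi hC hρ) x
  · refine (PreBialgebroid.mem_takeuchi _).2 fun r => ?_
    simpa [(C.src_comm_tgt p (op r)).eq] using π2_tgt_mul_tmul hC hρ r (C.src p) 1
  · refine (PreBialgebroid.mem_takeuchi _).2 fun r => ?_
    simpa [(C.src_comm_tgt r q).eq] using π2_tgt_mul_tmul hC hρ r 1 (C.tgt q)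

theorem mulL_comulHom (x : X) :
    PreBialgebroid.mulL (C.src.toLinearMap ∘ₗ counitMap hC hρ) (comulHom hC x) = x := by
  induction x using induction_on hC.2 with
  | add x y hx hy => rw [map_add, map_add, hx, hy]
  | mul p q a =>
    rw [comulHom_src_mul_tgt_mul_mid, map_sweedler]
    simpa using sweedler_counit_left (R := k)
      (fun y => C.src p * (C.tgt (op q) * C.mid y)) a
      (by constructor <;> intros <;> simp [mul_add])

theorem mulR_comulHom (x : X) :
    PreBialgebroid.mulR ((preBialgebroid hC hρ).β ∘ₗ counitMap hC hρ) (comulHom hC x) = x := by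
  induction x using induction_on hC.2 with
  | add x y hx hy => rw [map_add, map_add, hx, hy]
  | mul p q a =>
    rw [comulHom_src_mul_tgt_mul_mid, map_sweedler]
    simpa [(C.src_comm_tgt p (op q)).left_comm] using sweedler_counit_right (R := k)
      (fun x => C.src p * (C.tgt (op q) * C.mid x)) a
      (by constructor <;> intros <;> simp [mul_add])

theorem isBialgebroid : (preBialgebroid hC hρ).IsBialgebroid where
  Δ_one := congrArg _ (map_one (comulHom hC))
  coassoc x := congrArg _ (comulHom_coassoc hC x)
  Δ_cp3 x r := (Submodule.Quotient.mk_eq_zero _).2 (comulHom_mem_takeuchi hC hρ x r)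
  Δ_mul x y := congrArg _ (map_mul (comulHom hC) x y)
  Δ_left p x := by simp
  Δ_right q x := by simp
  ε_one := counitMap_one hC hρ
  ε_left p x := counitMap_src_mul hC hρ p x
  ε_right q x := counitMap_tgt_mul hC hρ q x
  counit_l := mulL_comulHom hC hρ
  counit_r := mulR_comulHom hC hρ

end Bialgebroid

end CovariantTriple

namespace CovariantTriple

section ParaHopf

open HopfAlgebra

variable {k 𝓗 P X : Type} [Field k] [Ring 𝓗] [HopfAlgebra k 𝓗] [Ring P] [Algebra k P]
  [Ring X] [Algebra k X] {ρ : 𝓗 →ₐ[k] Module.End k P} {C : CovariantTriple ρ X}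
  (hC : Function.Bijective C.normalOrder) (hρ : IsModuleAlgebra ρ) (δ : 𝓗 →ₐ[k] k)
  (hδ : Function.Involutive (twistedAntipode δ))

theorem mulL_paraAntipode_comulHom (x : X) :
    PreBialgebroid.mulL (paraAntipode hC δ hδ) (comulHom hC x) =
      C.tgt (op (counitMap hC hρ (paraAntipode hC δ hδ x))) := by
  induction x using induction_on hC.2 with
  | add x y hx hy => simp only [map_add, op_add, hx, hy]
  | mul p q h =>
    calc PreBialgebroid.mulL (paraAntipode hC δ hδ) (comulHom hC _)
        = sweedler k h fun x y => C.mid (twistedAntipode δ x) *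
            (C.tgt (op (q * p)) * C.mid y) := by
          simp [comulHom_src_mul_tgt_mul_mid, map_sweedler, paraAntipode_mul, mul_assoc]
      _ = C.tgt (op (ρ (twistedAntipode δ h) (q * p))) :=
          C.sweedler_mid_twistedAntipode_mul_tgt_mul_mid δ h (q * p)
      _ = _ := by simp [paraAntipode_src_mul_tgt_mul_mid]

theorem tau2_comulHom_src_mul_tgt_mul_mid (p q : P) (h : 𝓗) :
    (preBialgebroid hC hρ).tau2 (paraAntipode hC δ hδ)
        (comulHom hC (C.src p * (C.tgt (op q) * C.mid h))) =
      sweedler k h fun x y => C.tgt (op (ρ (antipode k y) q)) ⊗ₜ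
        (C.mid (twistedAntipode δ x) * C.tgt (op p)) := by
  have comul_mid (x : 𝓗) : comulHom hC (C.mid (twistedAntipode δ x)) =
      sweedler k x fun y z => C.mid (antipode k z) ⊗ₜ C.mid (twistedAntipode δ y) :=
    (comulHom_mid hC _).trans (sweedler_twistedAntipode δ _ x)
  have hassoc := sweedler_assoc (R := k)
    (fun x y z => (C.mid (antipode k y) * (C.tgt (op q) * C.mid z)) ⊗ₜ[k]
      (C.mid (twistedAntipode δ x) * C.tgt (op p))) h
  calc _ = sweedler k h fun t z => sweedler k t fun x y =>
        (C.mid (antipode k y) * (C.tgt (op q) * C.mid z)) ⊗ₜ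
          (C.mid (twistedAntipode δ x) * C.tgt (op p)) := by
        simp [comulHom_src_mul_tgt_mul_mid, map_sweedler, paraAntipode_mul, comul_mid, sweedler_mul]
    _ = _ := by
        simp only [hassoc, ← sweedler_tmul, sweedler_mid_antipode_mul_tgt_mul_mid]

theorem π2_tau2_comulHom (x : X) :
    (preBialgebroid hC hρ).π2
        ((preBialgebroid hC hρ).tau2 (paraAntipode hC δ hδ) (comulHom hC x)) =
      (preBialgebroid hC hρ).π2 (1 ⊗ₜ paraAntipode hC δ hδ x) := by
  let π := (preBialgebroid hC hρ).π2
  induction x using induction_on hC.2 with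
  | add x y hx hy => simp only [map_add, tmul_add, hx, hy]
  | mul p q h =>
    have tgt_tmul (r : P) (y : X) : π (C.tgt (op r) ⊗ₜ y) = π (1 ⊗ₜ (C.src r * y)) := by
      simpa using π2_tgt_mul_tmul hC hρ r 1 y
    calc π ((preBialgebroid hC hρ).tau2 (paraAntipode hC δ hδ) (comulHom hC _))
        = sweedler k h fun x y => π (1 ⊗ₜ (C.src (ρ (antipode k y) q) *
            (C.mid (twistedAntipode δ x) * C.tgt (op p)))) := by
          simp only [tau2_comulHom_src_mul_tgt_mul_mid, map_sweedler, tgt_tmul]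
      _ = π (1 ⊗ₜ (C.mid (twistedAntipode δ h) * (C.src q * C.tgt (op p)))) := by
          simp only [← map_sweedler, ← tmul_sweedler, ← mul_assoc, ← sweedler_mul,
            ← mid_twistedAntipode_mul_src]
      _ = _ := by rw [paraAntipode_src_mul_tgt_mul_mid]

theorem isParaHopf : (preBialgebroid hC hρ).IsParaHopf (paraAntipode hC δ hδ) where
  bialgebroid := isBialgebroid hC hρ
  T_one := paraAntipode_one hC δ hδ
  T_antimul := paraAntipode_mul hC δ hδ
  PH1 := paraAntipode_tgt hC δ hδ
  PH2 := mulL_paraAntipode_comulHom hC hρ δ hδ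
  T_invol := paraAntipode_involutive hC δ hδ
  PH3 := π2_tau2_comulHom hC hρ δ hδ

end ParaHopf

end CovariantTriple

section IsDoubleCrossedProduct

variable {k 𝓗 P X : Type} [Field k] [Ring 𝓗] [HopfAlgebra k 𝓗] [Ring P] [Algebra k P]
  [Ring X] [Algebra k X]

theorem map_comul2_eq_sweedler {Y : Type*} [AddCommMonoid Y] [Module k Y]
    (L : 𝓗 ⊗[k] (𝓗 ⊗[k] 𝓗) →ₗ[k] Y) (h : 𝓗) :
    L (comul2 h) = sweedler k h fun x t => sweedler k t fun y z => L (x ⊗ₜ (y ⊗ₜ z)) := by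
  simp [comul2, comul_eq_sweedler, map_sweedler, tmul_sweedler]

variable {ρ : 𝓗 →ₐ[k] Module.End k P} {e : P ⊗[k] (𝓗 ⊗[k] P) ≃ₗ[k] X}

/-- The linear identification `e` turns the multiplication of `X` into that of the double crossed
product `P ⋊ 𝓗 ⋉ Pᵐᵒᵖ`. -/
structure IsDoubleCrossedProduct (ρ : 𝓗 →ₐ[k] Module.End k P)
    (e : P ⊗[k] (𝓗 ⊗[k] P) ≃ₗ[k] X) : Prop where
  map_one : e (1 ⊗ₜ (1 ⊗ₜ 1)) = 1
  map_mul (p p' q q' : P) (a b : 𝓗) :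
    e (p ⊗ₜ (a ⊗ₜ q)) * e (p' ⊗ₜ (b ⊗ₜ q')) =
      e (dcpMul ρ.toLinearMap p p' q q' b (comul2 a))

namespace IsDoubleCrossedProduct

variable (he : IsDoubleCrossedProduct ρ e) (hρ : IsModuleAlgebra ρ)
include he

theorem map_mul_eq_sweedler (p p' q q' : P) (a b : 𝓗) :
    e (p ⊗ₜ (a ⊗ₜ q)) * e (p' ⊗ₜ (b ⊗ₜ q')) =
      sweedler k a fun x t => sweedler k t fun y z =>
        e ((p * ρ x p') ⊗ₜ ((y * b) ⊗ₜ (ρ z q' * q))) :=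
  (he.map_mul p p' q q' a b).trans
    (map_comul2_eq_sweedler (e.toLinearMap ∘ₗ dcpMul ρ.toLinearMap p p' q q' b) a)

theorem map_tmul_one_tmul_mul (p p' q q' : P) (b : 𝓗) :
    e (p ⊗ₜ (1 ⊗ₜ q)) * e (p' ⊗ₜ (b ⊗ₜ q')) = e ((p * p') ⊗ₜ (b ⊗ₜ (q' * q))) := by
  simp [he.map_mul, comul2, dcpMul, Algebra.TensorProduct.one_def]

/-- The inclusion `p ↦ p ⋊ 1 ⋉ 1` of the base algebra. -/
def srcHom : P →ₐ[k] X :=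
  AlgHom.ofLinearMap (e.toLinearMap ∘ₗ (TensorProduct.mk k P (𝓗 ⊗[k] P)).flip (1 ⊗ₜ 1))
    he.map_one (fun p p' => by simp [he.map_tmul_one_tmul_mul])

/-- The inclusion `q ↦ 1 ⋊ 1 ⋉ q` of the opposite base algebra. -/
def tgtHom : Pᵐᵒᵖ →ₐ[k] X :=
  AlgHom.ofLinearMap (e.toLinearMap ∘ₗ TensorProduct.mk k P (𝓗 ⊗[k] P) 1 ∘ₗ
      TensorProduct.mk k 𝓗 P 1 ∘ₗ (opLinearEquiv k).symm.toLinearMap)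
    he.map_one (fun q q' => by simp [he.map_tmul_one_tmul_mul])

@[simp]
theorem srcHom_apply (p : P) : he.srcHom p = e (p ⊗ₜ (1 ⊗ₜ 1)) :=
  rfl

@[simp]
theorem tgtHom_apply (q : Pᵐᵒᵖ) : he.tgtHom q = e (1 ⊗ₜ (1 ⊗ₜ q.unop)) :=
  rfl

include hρ

theorem map_mul_map_tmul_one (a b : 𝓗) (p : P) :
    e (1 ⊗ₜ (a ⊗ₜ 1)) * e (p ⊗ₜ (b ⊗ₜ 1)) =
      sweedler k a fun x y => e (ρ x p ⊗ₜ ((y * b) ⊗ₜ 1)) := by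
  have counit_right (x t : 𝓗) : (sweedler k t fun y z =>
      counit (R := k) z • e (ρ x p ⊗ₜ[k] ((y * b) ⊗ₜ[k] 1))) = e (ρ x p ⊗ₜ ((t * b) ⊗ₜ 1)) :=
    sweedler_counit_right (fun y => e (ρ x p ⊗ₜ[k] ((y * b) ⊗ₜ[k] 1))) t
      (by constructor <;> intros <;> simp [add_mul, add_tmul, tmul_add, ← smul_tmul'])
  simp only [he.map_mul_eq_sweedler, hρ.map_one, one_mul, mul_one, tmul_smul, map_smul,
    counit_right]

theorem map_mul_map_one_tmul (a : 𝓗) (q : P) :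
    e (1 ⊗ₜ (a ⊗ₜ 1)) * e (1 ⊗ₜ (1 ⊗ₜ q)) =
      sweedler k a fun x y => e (1 ⊗ₜ (x ⊗ₜ ρ y q)) := by
  have counit_left (t z : 𝓗) : (sweedler k t fun x y =>
      counit (R := k) x • e (1 ⊗ₜ[k] (y ⊗ₜ[k] ρ z q))) = e (1 ⊗ₜ (t ⊗ₜ ρ z q)) :=
    sweedler_counit_left (fun y => e (1 ⊗ₜ[k] (y ⊗ₜ[k] ρ z q))) t
      (by constructor <;> intros <;> simp [add_tmul, tmul_add, ← smul_tmul'])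
  have hassoc := sweedler_assoc (R := k)
    (fun x y z : 𝓗 => counit (R := k) x • e (1 ⊗ₜ[k] (y ⊗ₜ[k] ρ z q))) a
  simp only [counit_left] at hassoc
  simpa only [he.map_mul_eq_sweedler, hρ.map_one, one_mul, mul_one, ← smul_tmul',
    map_smul] using hassoc.symm

theorem map_one_tmul_mul_tmul_one (a b : 𝓗) :
    e (1 ⊗ₜ ((a * b) ⊗ₜ 1)) = e (1 ⊗ₜ (a ⊗ₜ 1)) * e (1 ⊗ₜ (b ⊗ₜ 1)) := by
  have h := sweedler_counit_left (R := k) (fun y : 𝓗 => e (1 ⊗ₜ[k] ((y * b) ⊗ₜ[k] (1 : P)))) a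
    (by constructor <;> intros <;> simp [add_mul, add_tmul, tmul_add, ← smul_tmul'])
  simpa [he.map_mul_map_tmul_one hρ, hρ.map_one, ← smul_tmul'] using h.symm

/-- The inclusion `a ↦ 1 ⋊ a ⋉ 1` of the Hopf algebra. -/
def midHom : 𝓗 →ₐ[k] X :=
  AlgHom.ofLinearMap
    (e.toLinearMap ∘ₗ TensorProduct.mk k P (𝓗 ⊗[k] P) 1 ∘ₗ (TensorProduct.mk k 𝓗 P).flip 1)
    he.map_one (he.map_one_tmul_mul_tmul_one hρ)

@[simp]
theorem midHom_apply (a : 𝓗) : he.midHom hρ a = e (1 ⊗ₜ (a ⊗ₜ 1)) :=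
  rfl

/-- The tautological covariant triple of a double crossed product, given by its three tensor
factors. -/
def triple : CovariantTriple ρ X where
  src := he.srcHom
  tgt := he.tgtHom
  mid := he.midHom hρ
  src_comm_tgt p q := by simp [Commute, SemiconjBy, he.map_tmul_one_tmul_mul]
  mid_mul_src a p := by simp [he.map_tmul_one_tmul_mul, he.map_mul_map_tmul_one hρ]
  mid_mul_tgt a q := by simp [he.map_tmul_one_tmul_mul, he.map_mul_map_one_tmul hρ]

@[simp]
theorem triple_normalOrder_apply (t : P ⊗[k] (𝓗 ⊗[k] P)) :
    (he.triple hρ).normalOrder t = e t := by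
  suffices (he.triple hρ).normalOrder = e.toLinearMap from DFunLike.congr_fun this t
  exact TensorProduct.ext_threefold' fun p a q => by simp [triple, he.map_tmul_one_tmul_mul]

theorem normalOrder_bijective : Function.Bijective (he.triple hρ).normalOrder :=
  (funext (he.triple_normalOrder_apply hρ) : ⇑(he.triple hρ).normalOrder = e) ▸ e.bijective

end IsDoubleCrossedProduct

end IsDoubleCrossedProduct

section Formulas

open CovariantTriple HopfAlgebra

variable {k 𝓗 P X : Type} [Field k] [Ring 𝓗] [HopfAlgebra k 𝓗] [Ring P] [Algebra k P]
  [Ring X] [Algebra k X] {ρ : 𝓗 →ₐ[k] Module.End k P}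

theorem paraAntipode_normalOrder_tmul {C : CovariantTriple ρ X}
    (hC : Function.Bijective C.normalOrder) (δ : 𝓗 →ₐ[k] k)
    (hδ : Function.Involutive (twistedAntipode δ)) (p q : P) (h : 𝓗) :
    paraAntipode hC δ hδ (C.normalOrder (p ⊗ₜ (h ⊗ₜ q))) =
      C.normalOrder (dcpT ρ.toLinearMap δ p q (comul2 h)) := by
  have hassoc := sweedler_assoc (R := k)
    (fun x y z => C.src (ρ (antipode k z) q) *
      (C.tgt (op (ρ (twistedAntipode δ x) p)) * C.mid (antipode k y))) h
  calc paraAntipode hC δ hδ (C.normalOrder (p ⊗ₜ (h ⊗ₜ q)))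
      = C.mid (twistedAntipode δ h) * (C.src q * C.tgt (op p)) :=
        paraAntipode_src_mul_tgt_mul_mid hC δ hδ p q h
    _ = sweedler k h fun t z => sweedler k t fun x y => C.src (ρ (antipode k z) q) *
          (C.tgt (op (ρ (twistedAntipode δ x) p)) * C.mid (antipode k y)) := by
        simp only [← mul_assoc (C.mid _), mid_twistedAntipode_mul_src, sweedler_mul, mul_assoc,
          mid_twistedAntipode_mul_tgt, mul_sweedler]
    _ = _ := hassoc.trans (map_comul2_eq_sweedler
          (C.normalOrder ∘ₗ dcpT ρ.toLinearMap δ p q) h).symm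

variable {e : P ⊗[k] (𝓗 ⊗[k] P) ≃ₗ[k] X} (he : IsDoubleCrossedProduct ρ e)
  (hρ : IsModuleAlgebra ρ)

namespace IsDoubleCrossedProduct

theorem comulHom_map_tmul (p q : P) (h : 𝓗) :
    comulHom (he.normalOrder_bijective hρ) (e (p ⊗ₜ (h ⊗ₜ q))) = dcpΔ e p q (comul h) := by
  rw [← he.triple_normalOrder_apply hρ, CovariantTriple.normalOrder_tmul,
    comulHom_src_mul_tgt_mul_mid, map_comul_eq_sweedler]
  simp [triple, dcpΔ, he.map_tmul_one_tmul_mul]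

theorem counitMap_map_tmul (p q : P) (h : 𝓗) :
    counitMap (he.normalOrder_bijective hρ) hρ (e (p ⊗ₜ (h ⊗ₜ q))) =
      counit (R := k) h • (p * q) := by
  rw [← he.triple_normalOrder_apply hρ, CovariantTriple.normalOrder_tmul]
  simp

theorem paraAntipode_map_tmul (δ : 𝓗 →ₐ[k] k) (hδ : Function.Involutive (twistedAntipode δ))
    (p q : P) (h : 𝓗) :
    paraAntipode (he.normalOrder_bijective hρ) δ hδ (e (p ⊗ₜ (h ⊗ₜ q))) =
      e (dcpT ρ.toLinearMap δ p q (comul2 h)) := by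
  rw [← he.triple_normalOrder_apply hρ, ← he.triple_normalOrder_apply hρ,
    paraAntipode_normalOrder_tmul]

end IsDoubleCrossedProduct

end Formulas

open Coalgebra MulOpposite in
/-- the double crossed product `H = 𝒫 ⋊ 𝓗 ⋉ 𝒫ᵒᵖ` of a Hopf algebra `𝓗`
(with character `δ` whose twisted antipode is involutive) acting on a module algebra `𝒫`
is a para-Hopf algebroid over `𝒫`, with the Connes–Moscovici structure maps. -/
theorem doubleCrossedProduct_is_paraHopf
    {k 𝓗 PAlg HH : Type} [Field k] [Ring 𝓗] [HopfAlgebra k 𝓗]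
    [Ring PAlg] [Algebra k PAlg] [Ring HH] [Algebra k HH]
    (δ : 𝓗 →ₐ[k] k)
    (hS2 : ∀ h : 𝓗, twistedAntipode δ (twistedAntipode δ h) = h)
    -- `ρ` is a left action of `𝓗` on `𝒫` making `𝒫` an `𝓗`-module algebra:
    (ρ : 𝓗 →ₗ[k] PAlg →ₗ[k] PAlg)
    (hρ1 : ∀ p : PAlg, ρ 1 p = p)
    (hρmul : ∀ (g h : 𝓗) (p : PAlg), ρ (g * h) p = ρ g (ρ h p))
    (hρalg1 : ∀ h : 𝓗, ρ h (1 : PAlg) = counit (R := k) h • (1 : PAlg))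
    (hρalgmul : ∀ (h : 𝓗) (p q : PAlg),
      ρ h (p * q) =
        (TensorProduct.lift (LinearMap.mk₂ k (fun x y => ρ x p * ρ y q)
          (by intros; simp [map_add, add_mul])
          (by intros; simp [map_smul, smul_mul_assoc])
          (by intros; simp [map_add, mul_add])
          (by intros; simp [map_smul, mul_smul_comm]))) (comul h))
    -- `HH` is the double crossed product algebra, identified with `𝒫 ⊗ 𝓗 ⊗ 𝒫`
    -- via `e`, with the double crossed product multiplication and unit:
    (e : (PAlg ⊗[k] (𝓗 ⊗[k] PAlg)) ≃ₗ[k] HH)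
    (he1 : e ((1 : PAlg) ⊗ₜ[k] ((1 : 𝓗) ⊗ₜ[k] (1 : PAlg))) = 1)
    (hemul : ∀ (P₁ P₂ Q₁ Q₂ : PAlg) (h₁ h₂ : 𝓗),
      e (P₁ ⊗ₜ[k] (h₁ ⊗ₜ[k] Q₁)) * e (P₂ ⊗ₜ[k] (h₂ ⊗ₜ[k] Q₂)) =
        e (dcpMul ρ P₁ P₂ Q₁ Q₂ h₂ (comul2 h₁))) :
    ∃ (D : PreBialgebroid k HH PAlg) (T : HH →ₗ[k] HH),
      D.IsParaHopf T ∧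
      (∀ P : PAlg, D.α P = e (P ⊗ₜ[k] ((1 : 𝓗) ⊗ₜ[k] (1 : PAlg)))) ∧
      (∀ Q : PAlg, D.β Q = e ((1 : PAlg) ⊗ₜ[k] ((1 : 𝓗) ⊗ₜ[k] Q))) ∧
      (∀ (P Q : PAlg) (h : 𝓗),
        D.π2 (D.Δ (e (P ⊗ₜ[k] (h ⊗ₜ[k] Q)))) = D.π2 (dcpΔ e P Q (comul h))) ∧
      (∀ (P Q : PAlg) (h : 𝓗),
        D.ε (e (P ⊗ₜ[k] (h ⊗ₜ[k] Q))) = counit (R := k) h • (P * Q)) ∧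
      (∀ (P Q : PAlg) (h : 𝓗),
        T (e (P ⊗ₜ[k] (h ⊗ₜ[k] Q))) = e (dcpT ρ δ P Q (comul2 h))) := by
  let ρA : 𝓗 →ₐ[k] Module.End k PAlg :=
    AlgHom.ofLinearMap ρ (LinearMap.ext hρ1) fun g h => LinearMap.ext (hρmul g h)
  have hρA : IsModuleAlgebra ρA :=
    ⟨hρalg1, fun h p q => (hρalgmul h p q).trans (map_comul_eq_sweedler _ h)⟩
  have he : IsDoubleCrossedProduct ρA e := ⟨he1, hemul⟩
  have hC := he.normalOrder_bijective hρA
  refine ⟨CovariantTriple.preBialgebroid hC hρA, CovariantTriple.paraAntipode hC δ hS2,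
    CovariantTriple.isParaHopf hC hρA δ hS2, fun _ => rfl, fun _ => rfl, fun p q h => ?_,
    he.counitMap_map_tmul hρA, he.paraAntipode_map_tmul hρA δ hS2⟩
  exact congrArg (CovariantTriple.preBialgebroid hC hρA).π2 (he.comulHom_map_tmul hρA p q h)
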